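/- Let Δ be a simplicial complex on [n] with Stanley-Reisner ideal I_Δ ⊆ R. Then I_Δ is ass-decomposable if and only if Δ is vertex decomposable. -/

import Mathlib

open MvPolynomial

namespace Paper

/-- An (abstract) simplicial complex: a nonempty, downward closed collection of
finite subsets of the vertex set. -/
def IsComplex {n : ℕ} (Δ : Set (Finset (Fin n))) : Prop :=
  Δ.Nonempty ∧ ∀ F ∈ Δ, ∀ G, G ⊆ F → G ∈ Δ

/-- The deletion `del_Δ(v)`. -/
def delC {n : ℕ} (Δ : Set (Finset (Fin n))) (v : Fin n) : Set (Finset (Fin n)) :=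
  {G ∈ Δ | v ∉ G}

/-- The link `link_Δ(v)`. -/
def linkC {n : ℕ} (Δ : Set (Finset (Fin n))) (v : Fin n) : Set (Finset (Fin n)) :=
  {G | G ∈ Δ ∧ v ∉ G ∧ insert v G ∈ Δ}

/-- A facet is a maximal face. -/
def IsFacet {n : ℕ} (Δ : Set (Finset (Fin n))) (F : Finset (Fin n)) : Prop :=
  F ∈ Δ ∧ ∀ G ∈ Δ, F ⊆ G → G = F

/-- A vertex `v` of `Δ` is a shedding vertex if every facet of `del_Δ(v)` is a facet
of `Δ`. -/
def IsSheddingVertex {n : ℕ} (Δ : Set (Finset (Fin n))) (v : Fin n) : Prop :=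
  {v} ∈ Δ ∧ ∀ F, IsFacet (delC Δ v) F → IsFacet Δ F

/-- `Δ` is a simplex: it has a unique maximal face containing all faces. -/
def IsSimplexC {n : ℕ} (Δ : Set (Finset (Fin n))) : Prop :=
  ∃ F ∈ Δ, ∀ G ∈ Δ, G ⊆ F

/-- Vertex decomposability, defined recursively. -/
inductive IsVertexDecomposable {n : ℕ} : Set (Finset (Fin n)) → Prop
  | simplex {Δ : Set (Finset (Fin n))} (h : IsComplex Δ) (hs : IsSimplexC Δ) :
      IsVertexDecomposable Δ
  | step {Δ : Set (Finset (Fin n))} (h : IsComplex Δ) (v : Fin n)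
      (hv : IsSheddingVertex Δ v)
      (h1 : IsVertexDecomposable (linkC Δ v)) (h2 : IsVertexDecomposable (delC Δ v)) :
      IsVertexDecomposable Δ

/-- The Stanley-Reisner ideal of `Δ`, generated by the squarefree monomials
`x_F = ∏_{i ∈ F} x_i` with `F ∉ Δ`. -/
noncomputable def SRIdeal (n : ℕ) (K : Type) [Field K] (Δ : Set (Finset (Fin n))) :
    Ideal (MvPolynomial (Fin n) K) :=
  Ideal.span {m | ∃ F : Finset (Fin n), F ∉ Δ ∧ m = ∏ i ∈ F, X i}

/-- `P_{F̄}`, the prime ideal generated by the variables `x_i` with `i ∉ F`. -/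
noncomputable def facePrime (n : ℕ) (K : Type) [Field K] (F : Finset (Fin n)) :
    Ideal (MvPolynomial (Fin n) K) :=
  Ideal.span ((fun i => (X i : MvPolynomial (Fin n) K)) '' {i | i ∉ F})

/-- A monomial ideal: an ideal generated by monomials. -/
def IsMonomialIdeal {n : ℕ} {K : Type} [Field K] (I : Ideal (MvPolynomial (Fin n) K)) : Prop :=
  ∃ S : Set (Fin n →₀ ℕ), I = Ideal.span ((fun a => monomial a (1 : K)) '' S)

/-- A squarefree monomial ideal: an ideal generated by squarefree monomials. -/
def IsSquarefreeMonomialIdeal {n : ℕ} {K : Type} [Field K]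
    (I : Ideal (MvPolynomial (Fin n) K)) : Prop :=
  ∃ S : Set (Fin n →₀ ℕ), (∀ a ∈ S, ∀ i, a i ≤ 1) ∧
    I = Ideal.span ((fun a => monomial a (1 : K)) '' S)

/-- An ideal `I` is unmixed if `dim A/I = dim A/𝔭` for every associated prime `𝔭` of `I`. -/
def IsUnmixed {A : Type} [CommRing A] (I : Ideal A) : Prop :=
  ∀ 𝔭 ∈ associatedPrimes A (A ⧸ I), ringKrullDim (A ⧸ I) = ringKrullDim (A ⧸ 𝔭)

/-- ass-decomposable ideals: `I` is ass-decomposable if it is primary, or there are a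
variable `x_i ∉ √I` and `k ≥ 1` with `ass(I + (x_i^k)) = {𝔭 ∈ ass(I) : x_i ∈ 𝔭}` such
that `I + (x_i^k)` and `I : x_i^k` are both ass-decomposable. -/
inductive IsAssDecomposable {n : ℕ} {K : Type} [Field K] :
    Ideal (MvPolynomial (Fin n) K) → Prop
  | primary {I : Ideal (MvPolynomial (Fin n) K)} (h : I.IsPrimary) : IsAssDecomposable I
  | step {I : Ideal (MvPolynomial (Fin n) K)} (i : Fin n) (k : ℕ) (hk : 1 ≤ k)
      (hx : X i ∉ I.radical)
      (hass : associatedPrimes (MvPolynomial (Fin n) K)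
          (MvPolynomial (Fin n) K ⧸ (I + Ideal.span {(X i : MvPolynomial (Fin n) K) ^ k})) =
        {𝔭 ∈ associatedPrimes (MvPolynomial (Fin n) K) (MvPolynomial (Fin n) K ⧸ I) |
          (X i : MvPolynomial (Fin n) K) ∈ 𝔭})
      (h1 : IsAssDecomposable (I + Ideal.span {(X i : MvPolynomial (Fin n) K) ^ k}))
      (h2 : IsAssDecomposable (I.colon (Ideal.span {(X i : MvPolynomial (Fin n) K) ^ k}))) :
      IsAssDecomposable I

/-!
Both properties turn out to satisfy the same recursion over the vertices of `Δ`. On the algebraic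
side, `I_Δ + (x_v)` and `I_Δ : x_v` are the Stanley-Reisner ideals of the deletion and of the
closed star of `v`. The associated primes of `I_Δ` are the primes `P_{F̄}` of the facets `F`, so for
`k = 1` the condition on associated primes says that `v` is a shedding vertex. For `k ≥ 2` it
fails: `(I_Δ + (x_v^k)) : x_v^(k-1)` is the ideal of the link of `v`, so the facets of the link
yield associated primes of `I_Δ + (x_v^k)`, although no facet of the link is a facet of `Δ`.

On the combinatorial side the recursion involves the link rather than the star. The star is the
cone over the link, and forming a cone neither creates nor destroys vertex decomposability. The
deletion and the star of a shedding vertex are strictly smaller than `Δ`, so well-founded induction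
on `Δ` identifies the two properties.
-/

section Complexes

variable {n : ℕ} {Δ : Set (Finset (Fin n))} {F : Finset (Fin n)} {v w : Fin n}

theorem IsComplex.mem_of_subset (hΔ : IsComplex Δ) {G : Finset (Fin n)} (hF : F ∈ Δ)
    (hGF : G ⊆ F) : G ∈ Δ :=
  hΔ.2 F hF G hGF

theorem IsComplex.empty_mem (hΔ : IsComplex Δ) : ∅ ∈ Δ :=
  let ⟨_, hF⟩ := hΔ.1
  hΔ.mem_of_subset hF (Finset.empty_subset _)

/-- The set of facets of `Δ`, which indexes the associated primes of its Stanley-Reisner ideal. -/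
def facets (Δ : Set (Finset (Fin n))) : Set (Finset (Fin n)) :=
  {F | IsFacet Δ F}

theorem facets_eq_setOf_maximal (Δ : Set (Finset (Fin n))) : facets Δ = {F | Maximal (· ∈ Δ) F} :=
  Set.ext fun _ => and_congr_right fun _ =>
    ⟨fun h _ hG hle => (h _ hG hle).le, fun h _ hG hle => (h hG hle).antisymm hle⟩

theorem isAntichain_facets (Δ : Set (Finset (Fin n))) : IsAntichain (· ≤ ·) (facets Δ) :=
  facets_eq_setOf_maximal Δ ▸ setOfPred_maximal_antichain _

theorem exists_mem_facets_superset (hF : F ∈ Δ) : ∃ G ∈ facets Δ, F ⊆ G := by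
  obtain ⟨G, hFG, hG⟩ := Δ.toFinite.exists_le_maximal hF
  exact ⟨G, facets_eq_setOf_maximal Δ ▸ hG, hFG⟩

theorem isSimplexC_iff_exists_facets_eq_singleton : IsSimplexC Δ ↔ ∃ F, facets Δ = {F} := by
  constructor
  · rintro ⟨F, hF, hmax⟩
    refine ⟨F, Set.eq_singleton_iff_unique_mem.2 ⟨⟨hF, fun G hG => (hmax G hG).antisymm⟩, ?_⟩⟩
    exact fun G hG => (hG.2 F hF (hmax G hG.1)).symm
  · rintro ⟨F, hF⟩
    refine ⟨F, (hF ▸ rfl : F ∈ facets Δ).1, fun G hG => ?_⟩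
    obtain ⟨H, hH, hGH⟩ := exists_mem_facets_superset hG
    rw [hF, Set.mem_singleton_iff] at hH
    exact hH ▸ hGH

theorem isComplex_delC (hΔ : IsComplex Δ) (v : Fin n) : IsComplex (delC Δ v) :=
  ⟨⟨∅, hΔ.empty_mem, Finset.notMem_empty v⟩,
    fun _ hF _ hGF => ⟨hΔ.mem_of_subset hF.1 hGF, fun hv => hF.2 (hGF hv)⟩⟩

theorem erase_mem_delC (hΔ : IsComplex Δ) (hF : F ∈ Δ) : F.erase v ∈ delC Δ v :=
  ⟨hΔ.mem_of_subset hF (Finset.erase_subset v F), Finset.notMem_erase v F⟩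

theorem isComplex_linkC (hΔ : IsComplex Δ) (hv : {v} ∈ Δ) : IsComplex (linkC Δ v) :=
  ⟨⟨∅, hΔ.empty_mem, Finset.notMem_empty v, hv⟩, fun _ hF _ hGF =>
    ⟨hΔ.mem_of_subset hF.1 hGF, fun hv => hF.2.1 (hGF hv),
      hΔ.mem_of_subset hF.2.2 (Finset.insert_subset_insert v hGF)⟩⟩

theorem mem_linkC_iff (hΔ : IsComplex Δ) : F ∈ linkC Δ v ↔ v ∉ F ∧ insert v F ∈ Δ :=
  ⟨And.right, fun h => ⟨hΔ.mem_of_subset h.2 (Finset.subset_insert v F), h⟩⟩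

theorem delC_delC_comm (Δ : Set (Finset (Fin n))) (v w : Fin n) :
    delC (delC Δ v) w = delC (delC Δ w) v :=
  Set.ext fun _ => and_right_comm

theorem linkC_delC_comm (Δ : Set (Finset (Fin n))) (hwv : w ≠ v) :
    linkC (delC Δ v) w = delC (linkC Δ w) v := by
  ext G
  simp only [linkC, delC, Set.mem_ofPred_eq, Finset.mem_insert, hwv.symm, false_or]
  tauto

theorem isSheddingVertex_iff_facets_delC_eq (hv : {v} ∈ Δ) :
    IsSheddingVertex Δ v ↔ facets (delC Δ v) = {F ∈ facets Δ | v ∉ F} := by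
  constructor
  · intro h
    ext F
    exact ⟨fun hF => ⟨h.2 F hF, hF.1.2⟩,
      fun hF => ⟨⟨hF.1.1, hF.2⟩, fun G hG => hF.1.2 G hG.1⟩⟩
  · exact fun h => ⟨hv, fun F hF => (h.subset hF).1⟩

end Complexes

section ConesAndStars

variable {n : ℕ} {Δ Γ : Set (Finset (Fin n))} {F : Finset (Fin n)} {v w : Fin n}

/-- `Γ` is a cone with apex `v`, encoded as: adding `v` to a face of `Γ` gives a face of `Γ`.
Stars are cones, and the base `delC Γ v` of the star of `v` is the link of `v`. -/
def IsConeOver (Γ : Set (Finset (Fin n))) (v : Fin n) : Prop :=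
  ∀ G ∈ Γ, insert v G ∈ Γ

theorem isConeOver_delC (hc : IsConeOver Γ v) (hwv : w ≠ v) : IsConeOver (delC Γ w) v :=
  fun G hG => ⟨hc G hG.1, by simp [hwv, hG.2]⟩

theorem isConeOver_linkC (hc : IsConeOver Γ v) (hwv : w ≠ v) : IsConeOver (linkC Γ w) v :=
  fun G hG => ⟨hc G hG.1, by simp [hwv, hG.2.1], Finset.insert_comm v w G ▸ hc _ hG.2.2⟩

namespace IsConeOver

theorem apex_mem_of_isFacet (hc : IsConeOver Γ v) (hF : IsFacet Γ F) : v ∈ F :=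
  Finset.insert_eq_self.1 (hF.2 _ (hc F hF.1) (Finset.subset_insert v F))

theorem isFacet_delC_iff (hΓ : IsComplex Γ) (hc : IsConeOver Γ v) :
    IsFacet (delC Γ v) F ↔ v ∉ F ∧ IsFacet Γ (insert v F) := by
  constructor
  · rintro ⟨⟨hF, hvF⟩, hmax⟩
    refine ⟨hvF, hc F hF, fun G hG hle => ?_⟩
    obtain ⟨hvG, hFG⟩ := Finset.insert_subset_iff.1 hle
    have : G.erase v = F :=
      hmax _ (erase_mem_delC hΓ hG) (Finset.subset_erase.2 ⟨hFG, hvF⟩)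
    rw [← this, Finset.insert_erase hvG]
  · rintro ⟨hvF, hF, hmax⟩
    refine ⟨⟨hΓ.mem_of_subset hF (Finset.subset_insert v F), hvF⟩, fun G ⟨hG, hvG⟩ hle => ?_⟩
    have : insert v G = insert v F := hmax _ (hc G hG) (Finset.insert_subset_insert v hle)
    rw [← Finset.erase_insert hvG, this, Finset.erase_insert hvF]

theorem isSimplexC_delC_iff (hΓ : IsComplex Γ) (hc : IsConeOver Γ v) :
    IsSimplexC (delC Γ v) ↔ IsSimplexC Γ := by
  constructor
  · rintro ⟨F, hF, hmax⟩
    exact ⟨insert v F, hc F hF.1,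
      fun G hG => Finset.subset_insert_iff.2 (hmax _ (erase_mem_delC hΓ hG))⟩
  · rintro ⟨F, hF, hmax⟩
    exact ⟨F.erase v, erase_mem_delC hΓ hF,
      fun G hG => Finset.subset_erase.2 ⟨hmax G hG.1, hG.2⟩⟩

theorem isSheddingVertex_delC_iff (hΓ : IsComplex Γ) (hc : IsConeOver Γ v) (hwv : w ≠ v) :
    IsSheddingVertex (delC Γ v) w ↔ IsSheddingVertex Γ w := by
  have hcw := isConeOver_delC hc hwv
  have hΓw := isComplex_delC hΓ w
  simp only [IsSheddingVertex, delC_delC_comm Γ v w, isFacet_delC_iff hΓ hc,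
    isFacet_delC_iff hΓw hcw]
  refine and_congr ⟨And.left, fun hw => ⟨hw, by simpa using hwv.symm⟩⟩ ⟨fun h F hF => ?_, ?_⟩
  · have hvF : insert v (F.erase v) = F := Finset.insert_erase (hcw.apex_mem_of_isFacet hF)
    exact hvF ▸ (h (F.erase v) ⟨Finset.notMem_erase v F, hvF.symm ▸ hF⟩).2
  · exact fun h F hF => ⟨hF.1, h _ hF.2⟩

theorem isVertexDecomposable_delC (hc : IsConeOver Γ v) (h : IsVertexDecomposable Γ) :
    IsVertexDecomposable (delC Γ v) := by
  induction h with
  | simplex hΓ hs => exact .simplex (isComplex_delC hΓ v) ((isSimplexC_delC_iff hΓ hc).2 hs)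
  | @step Γ hΓ w hw _ hdel ihlink ihdel =>
    obtain rfl | hwv := eq_or_ne w v
    · exact hdel
    refine .step (isComplex_delC hΓ v) w ((isSheddingVertex_delC_iff hΓ hc hwv).2 hw) ?_ ?_
    · exact linkC_delC_comm Γ hwv ▸ ihlink (isConeOver_linkC hc hwv)
    · exact delC_delC_comm Γ w v ▸ ihdel (isConeOver_delC hc hwv)

theorem isVertexDecomposable_of_delC (hΓ : IsComplex Γ) (hc : IsConeOver Γ v)
    (h : IsVertexDecomposable (delC Γ v)) : IsVertexDecomposable Γ := by
  generalize hΘ : delC Γ v = Θ at h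
  induction h generalizing Γ with
  | simplex _ hs => exact .simplex hΓ ((isSimplexC_delC_iff hΓ hc).1 (hΘ ▸ hs))
  | step _ w hw _ _ ihlink ihdel =>
    subst hΘ
    have hwv : w ≠ v := fun h => hw.1.2 (by simp [h])
    refine .step hΓ w ((isSheddingVertex_delC_iff hΓ hc hwv).1 hw) ?_ ?_
    · exact ihlink (isComplex_linkC hΓ hw.1.1) (isConeOver_linkC hc hwv)
        (linkC_delC_comm Γ hwv).symm
    · exact ihdel (isComplex_delC hΓ w) (isConeOver_delC hc hwv) (delC_delC_comm Γ w v)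

theorem isVertexDecomposable_delC_iff (hΓ : IsComplex Γ) (hc : IsConeOver Γ v) :
    IsVertexDecomposable (delC Γ v) ↔ IsVertexDecomposable Γ :=
  ⟨isVertexDecomposable_of_delC hΓ hc, isVertexDecomposable_delC hc⟩

end IsConeOver

/-- The closed star of `v` in `Δ`, the cone with apex `v` over the link of `v`. It is introduced
because `I_Δ : x_v` is the Stanley-Reisner ideal of the star, not of the link. -/
def starC (Δ : Set (Finset (Fin n))) (v : Fin n) : Set (Finset (Fin n)) :=
  {G | insert v G ∈ Δ}

theorem isComplex_starC (hΔ : IsComplex Δ) (hv : {v} ∈ Δ) : IsComplex (starC Δ v) :=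
  ⟨⟨∅, hv⟩, fun _ hF _ hGF => hΔ.mem_of_subset hF (Finset.insert_subset_insert v hGF)⟩

theorem isConeOver_starC (Δ : Set (Finset (Fin n))) (v : Fin n) : IsConeOver (starC Δ v) v :=
  fun G hG => show insert v (insert v G) ∈ Δ from (Finset.insert_idem v G).symm ▸ hG

theorem delC_starC (hΔ : IsComplex Δ) (v : Fin n) : delC (starC Δ v) v = linkC Δ v :=
  Set.ext fun _ => and_comm.trans (mem_linkC_iff hΔ).symm

theorem isVertexDecomposable_linkC_iff_starC (hΔ : IsComplex Δ) (hv : {v} ∈ Δ) :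
    IsVertexDecomposable (linkC Δ v) ↔ IsVertexDecomposable (starC Δ v) :=
  delC_starC hΔ v ▸ (isConeOver_starC Δ v).isVertexDecomposable_delC_iff (isComplex_starC hΔ hv)

theorem delC_ssubset (hv : {v} ∈ Δ) : delC Δ v ⊂ Δ :=
  ⟨fun _ hG => hG.1, fun h => (h hv).2 (Finset.mem_singleton_self v)⟩

theorem IsSheddingVertex.starC_ssubset (hΔ : IsComplex Δ) (hv : IsSheddingVertex Δ v) :
    starC Δ v ⊂ Δ := by
  refine ⟨fun G hG => hΔ.mem_of_subset hG (Finset.subset_insert v G), fun h => ?_⟩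
  have hc : IsConeOver Δ v := fun G hG => h hG
  obtain ⟨F, hF, -⟩ := exists_mem_facets_superset (isComplex_delC hΔ v).empty_mem
  exact hF.1.2 (hc.apex_mem_of_isFacet (hv.2 F hF))

theorem isVertexDecomposable_iff (hΔ : IsComplex Δ) :
    IsVertexDecomposable Δ ↔ IsSimplexC Δ ∨ ∃ v, IsSheddingVertex Δ v ∧
      IsVertexDecomposable (delC Δ v) ∧ IsVertexDecomposable (starC Δ v) := by
  constructor
  · rintro (⟨-, hs⟩ | ⟨-, v, hv, hlink, hdel⟩)
    · exact .inl hs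
    · exact .inr ⟨v, hv, hdel, (isVertexDecomposable_linkC_iff_starC hΔ hv.1).1 hlink⟩
  · rintro (hs | ⟨v, hv, hdel, hstar⟩)
    · exact .simplex hΔ hs
    · exact .step hΔ v hv ((isVertexDecomposable_linkC_iff_starC hΔ hv.1).2 hstar) hdel

end ConesAndStars

section AssociatedPrimes

variable {A : Type*} [CommRing A]

theorem associatedPrimes_quotient_eq (I : Ideal A) :
    associatedPrimes A (A ⧸ I) = Submodule.associatedPrimes I := by
  have hcolon (g : A) : (⊥ : Submodule A (A ⧸ I)).colon {Ideal.Quotient.mk I g} = I.colon {g} := by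
    ext f
    rw [Submodule.mem_colon_singleton, Submodule.mem_colon_singleton, Submodule.mem_bot]
    exact Ideal.Quotient.eq_zero_iff_mem
  ext p
  simp only [AssociatedPrimes.mem_iff, IsAssociatedPrime, Submodule.AssociatePrimes.mem_iff,
    Submodule.isAssociatedPrime_def, (Ideal.Quotient.mk_surjective (I := I)).exists, hcolon]

theorem associatedPrimes_quotient_colon_subset (I : Ideal A) (g : A) :
    associatedPrimes A (A ⧸ I.colon (Ideal.span {g} : Set A)) ⊆ associatedPrimes A (A ⧸ I) := by
  rw [associatedPrimes_quotient_eq, associatedPrimes_quotient_eq]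
  rintro p ⟨hp, h, rfl⟩
  refine ⟨hp, h * g, congrArg Ideal.radical ?_⟩
  ext f
  simp only [Submodule.mem_colon_singleton, smul_eq_mul, Ideal.mem_colon_span_singleton, mul_assoc]

theorem associatedPrimes_quotient_sInf {S : Set (Ideal A)} (hfin : S.Finite)
    (hprime : ∀ P ∈ S, P.IsPrime) (hanti : IsAntichain (· ≤ ·) S) :
    associatedPrimes A (A ⧸ sInf S) = S := by
  lift S to Finset (Ideal A) using hfin
  have hradical : Set.EqOn (fun P : Ideal A => (P.colon Set.univ).radical) id S := fun P hP => by
    simp only [Submodule.colon_univ, (hprime P hP).radical, id]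
  have hmin : Submodule.IsMinimalPrimaryDecomposition (sInf (S : Set (Ideal A))) S :=
    { inf_eq := Finset.inf_id_eq_sInf S
      primary := fun P hP => (hprime P hP).isPrimary
      distinct := fun P hP Q hQ hne => by
        simpa only [Function.onFun, hradical hP, hradical hQ, id] using hne
      minimal := fun P hP hle => by
        obtain ⟨Q, hQ, hQP⟩ := (hprime P hP).inf_le'.1 hle
        obtain ⟨hne, hQS⟩ := Finset.mem_erase.1 hQ
        exact hanti hQS hP hne hQP }
  rw [associatedPrimes_quotient_eq, ← hmin.image_radical_eq_associated_primes, hradical.image_eq,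
    Set.image_id]

end AssociatedPrimes

section MonomialIdeals

variable {σ R : Type*}

theorem forall_mem_support_mul_X_pow [CommSemiring R] (f : MvPolynomial σ R) (i : σ) (k : ℕ)
    (p : (σ →₀ ℕ) → Prop) :
    (∀ m ∈ (f * X i ^ k).support, p m) ↔ ∀ m ∈ f.support, p (m + Finsupp.single i k) := by
  have : (f * X i ^ k).support = f.support.map (addRightEmbedding (Finsupp.single i k)) := by
    rw [X_pow_eq_monomial]
    exact AddMonoidAlgebra.support_coeff_mul_single f 1 (by simp) _
  simp [this]

theorem support_add_single [DecidableEq σ] (m : σ →₀ ℕ) (i : σ) {k : ℕ} (hk : k ≠ 0) :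
    (m + Finsupp.single i k).support = insert i m.support := by
  rw [Finsupp.support_add_eq_union, Finsupp.support_single i hk, Finset.union_comm,
    Finset.insert_eq]

theorem isPrime_span_X_image [CommRing R] [IsDomain R] (s : Set σ) :
    (Ideal.span (X '' s : Set (MvPolynomial σ R))).IsPrime := by
  have hker : Ideal.span (X '' s) =
      RingHom.ker (killCompl (R := R) (Subtype.val_injective (p := (· ∉ s)))) := by
    ext f
    rw [RingHom.mem_ker, mem_ideal_span_X_image, MvPolynomial.ext_iff]
    simp only [coeff_killCompl, coeff_zero]
    constructor
    · intro h d
      by_contra hd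
      obtain ⟨i, hi, hne⟩ := h _ (mem_support_iff.2 hd)
      refine hne (Finsupp.mapDomain_of_notMem_range d i ?_)
      simpa using hi
    · intro h m hm
      by_contra! hms
      have hrange : (m.support : Set σ) ⊆ Set.range (Subtype.val : {i // i ∉ s} → σ) :=
        fun i hi => ⟨⟨i, fun his => Finsupp.mem_support_iff.1 hi (hms i his)⟩, rfl⟩
      refine mem_support_iff.1 hm ?_
      rw [← Finsupp.mapDomain_comapDomain _ Subtype.val_injective m hrange]
      exact h _
  exact hker ▸ RingHom.ker_isPrime _

end MonomialIdeals

section StanleyReisner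

variable {n : ℕ} {K : Type} [Field K] {Δ : Set (Finset (Fin n))} {v : Fin n}

theorem SRIdeal_eq_span_monomial (Δ : Set (Finset (Fin n))) :
    SRIdeal n K Δ = Ideal.span ((fun a => monomial a (1 : K)) '' {a | a.support ∉ Δ}) := by
  apply le_antisymm <;> refine Ideal.span_le.2 ?_
  · rintro _ ⟨F, hF, rfl⟩
    have hsupp : (Finsupp.indicator F fun _ _ => 1 : Fin n →₀ ℕ).support = F := by
      ext i
      simp
    refine Ideal.subset_span ⟨Finsupp.indicator F fun _ _ => 1, ?_, ?_⟩
    · rwa [Set.mem_ofPred_eq, hsupp]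
    · simpa using (prod_X_pow (R := K) (fun _ => 1) F).symm
  · rintro _ ⟨a, ha, rfl⟩
    have hdvd : ∏ i ∈ a.support, X i ∣ monomial a (1 : K) := by
      rw [← prod_X_pow_eq_monomial]
      exact Finset.prod_dvd_prod_of_dvd _ _ fun i hi =>
        dvd_pow_self _ (Finsupp.mem_support_iff.1 hi)
    exact Ideal.mem_of_dvd _ hdvd (Ideal.subset_span ⟨a.support, ha, rfl⟩)

theorem exists_support_notMem_and_le_iff (hΔ : IsComplex Δ) {m : Fin n →₀ ℕ} :
    (∃ a : Fin n →₀ ℕ, a.support ∉ Δ ∧ a ≤ m) ↔ m.support ∉ Δ :=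
  ⟨fun ⟨_, ha, ham⟩ hm => ha (hΔ.mem_of_subset hm (Finsupp.support_mono ham)),
    fun hm => ⟨m, hm, le_rfl⟩⟩

theorem mem_SRIdeal_iff (hΔ : IsComplex Δ) {f : MvPolynomial (Fin n) K} :
    f ∈ SRIdeal n K Δ ↔ ∀ m ∈ f.support, m.support ∉ Δ := by
  rw [SRIdeal_eq_span_monomial, mem_ideal_span_monomial_image]
  exact forall₂_congr fun m _ => exists_support_notMem_and_le_iff hΔ

theorem mem_SRIdeal_add_span_X_pow_iff (hΔ : IsComplex Δ) (v : Fin n) (k : ℕ)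
    {f : MvPolynomial (Fin n) K} :
    f ∈ SRIdeal n K Δ + Ideal.span {X v ^ k} ↔ ∀ m ∈ f.support, m.support ∉ Δ ∨ k ≤ m v := by
  have hspan : SRIdeal n K Δ + Ideal.span {X v ^ k} = Ideal.span
      ((fun a => monomial a (1 : K)) '' ({a | a.support ∉ Δ} ∪ {Finsupp.single v k})) := by
    rw [Set.image_union, Ideal.span_union, SRIdeal_eq_span_monomial, Set.image_singleton,
      X_pow_eq_monomial, Submodule.add_eq_sup]
  rw [hspan, mem_ideal_span_monomial_image]
  refine forall₂_congr fun m _ => ?_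
  simp only [Set.mem_union, Set.mem_ofPred_eq, Set.mem_singleton_iff, or_and_right, exists_or,
    exists_eq_left, exists_support_notMem_and_le_iff hΔ, Finsupp.single_le_iff]

theorem mem_facePrime_iff {F : Finset (Fin n)} {f : MvPolynomial (Fin n) K} :
    f ∈ facePrime n K F ↔ ∀ m ∈ f.support, ¬ m.support ⊆ F := by
  refine mem_ideal_span_X_image.trans (forall₂_congr fun m _ => ?_)
  simp only [Finset.not_subset, Set.mem_ofPred_eq, Finsupp.mem_support_iff, and_comm]

theorem isPrime_facePrime (F : Finset (Fin n)) : (facePrime n K F).IsPrime :=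
  isPrime_span_X_image _

theorem X_mem_facePrime_iff {F : Finset (Fin n)} {i : Fin n} :
    X i ∈ facePrime n K F ↔ i ∉ F := by
  simp [mem_facePrime_iff, support_X]

theorem facePrime_le_facePrime_iff {F G : Finset (Fin n)} :
    facePrime n K F ≤ facePrime n K G ↔ G ⊆ F := by
  constructor
  · intro h i hi
    by_contra hiF
    exact X_mem_facePrime_iff.1 (h (X_mem_facePrime_iff.2 hiF)) hi
  · exact fun h => Ideal.span_mono (Set.image_mono fun i hi hiG => hi (h hiG))

theorem facePrime_injective : Function.Injective (facePrime n K) := fun _ _ h =>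
  (facePrime_le_facePrime_iff.1 h.ge).antisymm (facePrime_le_facePrime_iff.1 h.le)

theorem SRIdeal_eq_sInf_facePrime (hΔ : IsComplex Δ) :
    SRIdeal n K Δ = sInf (facePrime n K '' facets Δ) := by
  ext f
  simp only [mem_SRIdeal_iff hΔ, Ideal.mem_sInf, Set.forall_mem_image, mem_facePrime_iff]
  constructor
  · exact fun h F hF m hm hmF => h m hm (hΔ.mem_of_subset hF.1 hmF)
  · intro h m hm hmΔ
    obtain ⟨F, hF, hmF⟩ := exists_mem_facets_superset hmΔ
    exact h hF m hm hmF

theorem associatedPrimes_SRIdeal (hΔ : IsComplex Δ) :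
    associatedPrimes (MvPolynomial (Fin n) K) (MvPolynomial (Fin n) K ⧸ SRIdeal n K Δ) =
      facePrime n K '' facets Δ := by
  have hanti : IsAntichain (· ≤ ·) (facePrime n K '' facets Δ) := by
    rintro _ ⟨F, hF, rfl⟩ _ ⟨G, hG, rfl⟩ hne hle
    exact isAntichain_facets Δ hG hF (fun h => hne (h ▸ rfl)) (facePrime_le_facePrime_iff.1 hle)
  rw [SRIdeal_eq_sInf_facePrime hΔ]
  refine associatedPrimes_quotient_sInf (Set.toFinite _) ?_ hanti
  exact Set.forall_mem_image.2 fun F _ => isPrime_facePrime F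

theorem isPrimary_SRIdeal_iff (hΔ : IsComplex Δ) :
    (SRIdeal n K Δ).IsPrimary ↔ IsSimplexC Δ := by
  rw [isSimplexC_iff_exists_facets_eq_singleton]
  constructor
  · intro h
    have hass := associatedPrimes.eq_singleton_of_isPrimary h
    rw [associatedPrimes_SRIdeal hΔ] at hass
    obtain ⟨F, hF, -⟩ := exists_mem_facets_superset hΔ.empty_mem
    have hsub : (facets Δ).Subsingleton :=
      Set.subsingleton_of_image facePrime_injective _ (hass ▸ Set.subsingleton_singleton)
    exact ⟨F, hsub.eq_singleton_of_mem hF⟩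
  · rintro ⟨F, hF⟩
    rw [SRIdeal_eq_sInf_facePrime hΔ, hF, Set.image_singleton, sInf_singleton]
    exact (isPrime_facePrime F).isPrimary

theorem X_mem_radical_SRIdeal_iff (hΔ : IsComplex Δ) :
    X v ∈ (SRIdeal n K Δ).radical ↔ {v} ∉ Δ := by
  constructor
  · rintro ⟨k, hk⟩ hv
    rw [X_pow_eq_monomial, mem_SRIdeal_iff hΔ] at hk
    exact hk (Finsupp.single v k) (by simp) (hΔ.mem_of_subset hv Finsupp.support_single_subset)
  · intro hv
    apply Ideal.le_radical
    simpa [mem_SRIdeal_iff hΔ, support_X] using hv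

theorem SRIdeal_add_span_X (hΔ : IsComplex Δ) (v : Fin n) :
    SRIdeal n K Δ + Ideal.span {X v} = SRIdeal n K (delC Δ v) := by
  ext f
  rw [← pow_one (X v), mem_SRIdeal_add_span_X_pow_iff hΔ, mem_SRIdeal_iff (isComplex_delC hΔ v)]
  refine forall₂_congr fun m _ => ?_
  simp only [delC, Set.mem_ofPred_eq, Finsupp.mem_support_iff, Nat.one_le_iff_ne_zero]
  tauto

theorem SRIdeal_colon_span_X (hΔ : IsComplex Δ) (hv : {v} ∈ Δ) :
    (SRIdeal n K Δ).colon (Ideal.span {(X v : MvPolynomial (Fin n) K)}) =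
      SRIdeal n K (starC Δ v) := by
  ext f
  rw [Ideal.mem_colon_span_singleton, ← pow_one (X v), mem_SRIdeal_iff hΔ,
    forall_mem_support_mul_X_pow, mem_SRIdeal_iff (isComplex_starC hΔ hv)]
  simp only [support_add_single _ _ one_ne_zero, starC, Set.mem_ofPred_eq]

theorem SRIdeal_add_span_X_pow_colon (hΔ : IsComplex Δ) (hv : {v} ∈ Δ) {k : ℕ} (hk : k ≠ 0) :
    (SRIdeal n K Δ + Ideal.span {X v ^ (k + 1)}).colon
      (Ideal.span {(X v : MvPolynomial (Fin n) K) ^ k}) = SRIdeal n K (linkC Δ v) := by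
  ext f
  rw [Ideal.mem_colon_span_singleton, mem_SRIdeal_add_span_X_pow_iff hΔ,
    forall_mem_support_mul_X_pow, mem_SRIdeal_iff (isComplex_linkC hΔ hv)]
  refine forall₂_congr fun m _ => ?_
  have hpow : k + 1 ≤ m v + k ↔ v ∈ m.support := by
    rw [Finsupp.mem_support_iff]
    omega
  rw [support_add_single m v hk, Finsupp.add_apply, Finsupp.single_eq_same, hpow, mem_linkC_iff hΔ]
  tauto

theorem sep_associatedPrimes_SRIdeal_X_mem (hΔ : IsComplex Δ) (v : Fin n) :
    {𝔭 ∈ associatedPrimes (MvPolynomial (Fin n) K) (MvPolynomial (Fin n) K ⧸ SRIdeal n K Δ) |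
        X v ∈ 𝔭} =
      facePrime n K '' {F ∈ facets Δ | v ∉ F} := by
  rw [associatedPrimes_SRIdeal hΔ]
  ext p
  constructor
  · rintro ⟨⟨F, hF, rfl⟩, hvF⟩
    exact ⟨F, ⟨hF, X_mem_facePrime_iff.1 hvF⟩, rfl⟩
  · rintro ⟨F, ⟨hF, hvF⟩, rfl⟩
    exact ⟨⟨F, hF, rfl⟩, X_mem_facePrime_iff.2 hvF⟩

theorem not_associatedPrimes_add_span_X_pow_subset (hΔ : IsComplex Δ) (hv : {v} ∈ Δ) {k : ℕ}
    (hk : 2 ≤ k) :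
    ¬ associatedPrimes (MvPolynomial (Fin n) K)
        (MvPolynomial (Fin n) K ⧸ (SRIdeal n K Δ + Ideal.span {X v ^ k})) ⊆
      associatedPrimes (MvPolynomial (Fin n) K) (MvPolynomial (Fin n) K ⧸ SRIdeal n K Δ) := by
  intro hsub
  obtain ⟨l, rfl⟩ : ∃ l, k = l + 1 := ⟨k - 1, by omega⟩
  have hlink : IsComplex (linkC Δ v) := isComplex_linkC hΔ hv
  obtain ⟨F, hF, -⟩ := exists_mem_facets_superset hlink.empty_mem
  have hcolon := associatedPrimes_quotient_colon_subset
    (SRIdeal n K Δ + Ideal.span {X v ^ (l + 1)}) (X v ^ l)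
  rw [SRIdeal_add_span_X_pow_colon hΔ hv (by omega), associatedPrimes_SRIdeal hlink] at hcolon
  have hFΔ : F ∈ facets Δ := by
    have := hcolon.trans hsub (Set.mem_image_of_mem _ hF)
    rwa [associatedPrimes_SRIdeal hΔ, facePrime_injective.mem_set_image] at this
  obtain ⟨-, hvF, hins⟩ := hF.1
  exact hvF (Finset.insert_eq_self.1 (hFΔ.2 _ hins (Finset.subset_insert v F)))

theorem associatedPrimes_add_span_X_pow_eq_iff (hΔ : IsComplex Δ) (hv : {v} ∈ Δ) {k : ℕ}
    (hk : 1 ≤ k) :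
    associatedPrimes (MvPolynomial (Fin n) K)
        (MvPolynomial (Fin n) K ⧸ (SRIdeal n K Δ + Ideal.span {X v ^ k})) =
      {𝔭 ∈ associatedPrimes (MvPolynomial (Fin n) K) (MvPolynomial (Fin n) K ⧸ SRIdeal n K Δ) |
        X v ∈ 𝔭} ↔
    k = 1 ∧ IsSheddingVertex Δ v := by
  obtain rfl | hk2 := hk.eq_or_lt
  · rw [sep_associatedPrimes_SRIdeal_X_mem hΔ, pow_one, SRIdeal_add_span_X hΔ,
      associatedPrimes_SRIdeal (isComplex_delC hΔ v), facePrime_injective.image_injective.eq_iff,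
      isSheddingVertex_iff_facets_delC_eq hv, and_iff_right rfl]
  · refine iff_of_false (fun h => ?_) fun h => hk2.ne' h.1
    exact not_associatedPrimes_add_span_X_pow_subset hΔ hv hk2 (h.trans_subset (Set.sep_subset _ _))

theorem isAssDecomposable_SRIdeal_iff (hΔ : IsComplex Δ) :
    IsAssDecomposable (SRIdeal n K Δ) ↔ IsSimplexC Δ ∨ ∃ v, IsSheddingVertex Δ v ∧
      IsAssDecomposable (SRIdeal n K (delC Δ v)) ∧
      IsAssDecomposable (SRIdeal n K (starC Δ v)) := by
  constructor
  · rintro (hprim | ⟨v, k, hk, hx, hass, hadd, hcolon⟩)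
    · exact .inl ((isPrimary_SRIdeal_iff hΔ).1 hprim)
    · have hv : {v} ∈ Δ := not_not.1 (mt (X_mem_radical_SRIdeal_iff hΔ).2 hx)
      obtain ⟨rfl, hshed⟩ := (associatedPrimes_add_span_X_pow_eq_iff hΔ hv hk).1 hass
      rw [pow_one, SRIdeal_add_span_X hΔ] at hadd
      rw [pow_one, SRIdeal_colon_span_X hΔ hv] at hcolon
      exact .inr ⟨v, hshed, hadd, hcolon⟩
  · rintro (hs | ⟨v, hshed, hdel, hstar⟩)
    · exact .primary ((isPrimary_SRIdeal_iff hΔ).2 hs)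
    · have hv : {v} ∈ Δ := hshed.1
      refine .step v 1 le_rfl (fun hx => (X_mem_radical_SRIdeal_iff hΔ).1 hx hv)
        ((associatedPrimes_add_span_X_pow_eq_iff hΔ hv le_rfl).2 ⟨rfl, hshed⟩) ?_ ?_
      · rwa [pow_one, SRIdeal_add_span_X hΔ]
      · rwa [pow_one, SRIdeal_colon_span_X hΔ hv]

end StanleyReisner

theorem statement_7_general (n : ℕ) (K : Type) [Field K] (Δ : Set (Finset (Fin n)))
    (hΔ : IsComplex Δ) : IsAssDecomposable (SRIdeal n K Δ) ↔ IsVertexDecomposable Δ := by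
  induction Δ using WellFoundedLT.induction with
  | ind Δ ih =>
    rw [isAssDecomposable_SRIdeal_iff hΔ, isVertexDecomposable_iff hΔ]
    refine or_congr_right (exists_congr fun v => and_congr_right fun hv => and_congr ?_ ?_)
    · exact ih _ (delC_ssubset hv.1) (isComplex_delC hΔ v)
    · exact ih _ (hv.starC_ssubset hΔ) (isComplex_starC hΔ hv.1)

/-- For a simplicial complex `Δ` on `[n]`, the Stanley-Reisner ideal `I_Δ` is
ass-decomposable if and only if `Δ` is vertex decomposable. -/
theorem statement_7 (n : ℕ) (K : Type) [Field K] (Δ : Set (Finset (Fin n)))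
    (hΔ : IsComplex Δ) (hvert : ∀ u : Fin n, {u} ∈ Δ) :
    IsAssDecomposable (SRIdeal n K Δ) ↔ IsVertexDecomposable Δ :=
  statement_7_general n K Δ hΔ

end Paper
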